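/- For every element $w \in F_2$, there exists $g \in F_2$ such that for every automorphism $\varphi$ of $F_2$, the cyclic reduction of $\varphi(w)$ does not contain $g$ as a subword. Explicitly, if $|w| = l$, one may take $g = a^{l+2} b^{l+2}$. -/

import Mathlib

open FreeGroup List

abbrev F2 := FreeGroup (Fin 2)

/-- The generator `a` of `F₂`. -/
def ga : F2 := FreeGroup.of 0

/-- The generator `b` of `F₂`. -/
def gb : F2 := FreeGroup.of 1

/-- `v` contains a block `x^{±k}`: `k` consecutive occurrences of the letter `x`
with the same sign, as a contiguous subword of the reduced word of `v`.
Thus "every `x`-exponent of `v` has absolute value `≤ n`" is `¬ HasBlock x (n+1) v`. -/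
def HasBlock (x : Fin 2) (k : ℕ) (v : F2) : Prop :=
  (List.replicate k (x, true)) <:+: v.toWord ∨ (List.replicate k (x, false)) <:+: v.toWord

/-- A reduced word is cyclically reduced if its last letter is not
the inverse of its first letter. -/
def CyclicallyReduced (l : List (Fin 2 × Bool)) : Prop :=
  ∀ p ∈ l.head?, ∀ q ∈ l.getLast?, q ≠ (p.1, !p.2)

/-- `(x, y)` is a basis of `F₂`: the image of `(a, b)` under an automorphism. -/
def IsBasis (x y : F2) : Prop := ∃ φ : F2 ≃* F2, φ ga = x ∧ φ gb = y

/-- The length of the longest common prefix of two lists. -/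
def commonPrefixLength {α : Type*} [DecidableEq α] : List α → List α → ℕ
  | x :: s, y :: t => if x = y then commonPrefixLength s t + 1 else 0
  | _, _ => 0

section CommonPrefix

variable {α : Type*} [DecidableEq α]

lemma exists_split_commonPrefix (s t : List α) :
    ∃ p s' t', s = p ++ s' ∧ t = p ++ t' ∧ p.length = commonPrefixLength s t ∧
      ∀ x ∈ s'.head?, ∀ y ∈ t'.head?, x ≠ y := by
  induction s generalizing t with
  | nil => exact ⟨[], [], t, by simp [commonPrefixLength]⟩
  | cons x s ih =>
    cases t with
    | nil => exact ⟨[], x :: s, [], by simp [commonPrefixLength]⟩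
    | cons y t =>
      by_cases h : x = y
      · subst h
        obtain ⟨p, s', t', rfl, rfl, hp, hh⟩ := ih t
        exact ⟨x :: p, s', t', by simp, by simp, by simp [commonPrefixLength, hp], hh⟩
      · exact ⟨[], x :: s, y :: t, by simp, by simp, by simp [commonPrefixLength, h], by simpa⟩

lemma commonPrefixLength_comm (s t : List α) :
    commonPrefixLength s t = commonPrefixLength t s := by
  induction s generalizing t with
  | nil => cases t <;> simp [commonPrefixLength]
  | cons x s ih => cases t <;> simp [commonPrefixLength, ih, eq_comm]

lemma min_commonPrefixLength_le (s t u : List α) :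
    min (commonPrefixLength s t) (commonPrefixLength t u) ≤ commonPrefixLength s u := by
  induction s generalizing t u with
  | nil => simp [commonPrefixLength]
  | cons x s ih =>
    cases t with
    | nil => simp [commonPrefixLength]
    | cons y t =>
      cases u with
      | nil => simp [commonPrefixLength]
      | cons z u =>
        have := ih t u
        simp only [commonPrefixLength]
        split_ifs <;> first | omega | simp_all

end CommonPrefix

section Cancellation

variable {α : Type*} [DecidableEq α]

/-- The length of the common prefix of the reduced words of `u` and `v`; equivalently, the number
of letters cancelled on each side in the product `u⁻¹ * v`. -/
def cancellation (u v : FreeGroup α) : ℕ := commonPrefixLength u.toWord v.toWord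

lemma cancellation_comm (u v : FreeGroup α) : cancellation u v = cancellation v u :=
  commonPrefixLength_comm _ _

lemma min_cancellation_le (u v w : FreeGroup α) :
    min (cancellation u v) (cancellation v w) ≤ cancellation u w :=
  min_commonPrefixLength_le _ _ _

lemma exists_split_toWord_inv_mul (u v : FreeGroup α) :
    ∃ p s t, u.toWord = p ++ s ∧ v.toWord = p ++ t ∧ p.length = cancellation u v ∧
      (u⁻¹ * v).toWord = invRev s ++ t := by
  obtain ⟨p, s, t, hu, hv, hp, hst⟩ := exists_split_commonPrefix u.toWord v.toWord
  refine ⟨p, s, t, hu, hv, hp, ?_⟩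
  have hs : IsReduced (invRev s) := by
    have := (isReduced_toWord (x := u⁻¹))
    rw [toWord_inv, hu, invRev_append] at this
    exact this.infix (List.infix_append [] _ _)
  have ht : IsReduced t := (isReduced_toWord (x := v)).infix (hv ▸ ⟨p, [], by simp⟩)
  have hred : IsReduced (invRev s ++ t) := by
    refine List.isChain_append.2 ⟨hs, ht, ?_⟩
    intro x hx y hy hxy
    simp only [invRev, List.getLast?_reverse, List.head?_map, Option.mem_def,
      Option.map_eq_some_iff] at hx
    obtain ⟨z, hz, rfl⟩ := hx
    have := hst z hz y hy
    obtain ⟨z1, z2⟩ := z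
    obtain ⟨y1, y2⟩ := y
    simp only at hxy
    subst hxy
    cases z2 <;> cases y2 <;> simp_all
  have heq : u⁻¹ * v = mk (invRev s ++ t) := by
    rw [← mk_toWord (x := u), ← mk_toWord (x := v), hu, hv, ← mul_mk, ← mul_mk, ← mul_mk,
      ← inv_mk]
    group
  rw [heq, toWord_mk, hred.reduce_eq]

lemma norm_inv_mul_add_cancellation (u v : FreeGroup α) :
    norm (u⁻¹ * v) + 2 * cancellation u v = norm u + norm v := by
  obtain ⟨p, s, t, hu, hv, hp, h⟩ := exists_split_toWord_inv_mul u v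
  simp only [FreeGroup.norm, h, hu, hv, List.length_append, invRev_length]
  omega

lemma cancellation_inv_mul (u v : FreeGroup α) :
    cancellation u⁻¹ (u⁻¹ * v) + cancellation u v = norm u := by
  have h1 := norm_inv_mul_add_cancellation u v
  have h2 := norm_inv_mul_add_cancellation u⁻¹ (u⁻¹ * v)
  rw [inv_inv, mul_inv_cancel_left, norm_inv_eq] at h2
  omega

lemma norm_lt_norm_mul_self {u : FreeGroup α} (hu : u ≠ 1) : norm u < norm (u * u) := by
  have h1 := reduceCyclically.reduce_flatten_replicate_succ (isReduced_toWord (x := u)) 0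
  have h2 := reduceCyclically.reduce_flatten_replicate_succ (isReduced_toWord (x := u)) 1
  rw [← toWord_pow] at h1 h2
  have hne : reduceCyclically u.toWord ≠ [] := by
    intro h
    apply hu
    have := reduceCyclically.conj_conjugator_reduceCyclically u.toWord
    rw [h] at this
    rw [← mk_toWord (x := u), ← this]
    simp [← mul_mk, ← inv_mk]
  have := List.length_pos_iff.2 hne
  have h1' := congrArg List.length h1
  have h2' := congrArg List.length h2
  simp only [zero_add, pow_one, one_add_one_eq_two, List.length_append, List.length_flatten,
    List.map_replicate, List.sum_replicate, smul_eq_mul] at h1' h2'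
  rw [← pow_two, FreeGroup.norm, FreeGroup.norm]
  omega

lemma two_mul_cancellation_inv_lt {u : FreeGroup α} (hu : u ≠ 1) :
    2 * cancellation u u⁻¹ < norm u := by
  have h1 := norm_lt_norm_mul_self hu
  have h2 := norm_inv_mul_add_cancellation u⁻¹ u
  rw [inv_inv, norm_inv_eq, cancellation_comm] at h2
  omega

end Cancellation

section NielsenReduction

/-- The pairs obtained from the standard basis of `F₂` by elementary Nielsen moves and
simultaneous conjugations. -/
inductive NielsenPair : F2 → F2 → Prop
  | base : NielsenPair ga gb
  | swap {x y : F2} : NielsenPair x y → NielsenPair y x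
  | inv {x y : F2} : NielsenPair x y → NielsenPair x⁻¹ y
  | mul {x y : F2} : NielsenPair x y → NielsenPair (x * y) y
  | conj (h : F2) {x y : F2} : NielsenPair x y → NielsenPair (h * x * h⁻¹) (h * y * h⁻¹)

/-- `x` and `y` generate `F₂`. -/
def GeneratingPair (x y : F2) : Prop := Subgroup.closure {x, y} = (⊤ : Subgroup F2)

lemma GeneratingPair.of_mem {x y x' y' : F2} (h : GeneratingPair x y)
    (hx : x ∈ Subgroup.closure {x', y'}) (hy : y ∈ Subgroup.closure {x', y'}) :
    GeneratingPair x' y' := by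
  refine top_le_iff.1 (h ▸ (Subgroup.closure_le _).2 ?_)
  rintro z (rfl | rfl) <;> assumption

lemma left_mem_closure_pair {G : Type*} [Group G] (x y : G) : x ∈ Subgroup.closure {x, y} :=
  Subgroup.subset_closure (by simp)

lemma right_mem_closure_pair {G : Type*} [Group G] (x y : G) : y ∈ Subgroup.closure {x, y} :=
  Subgroup.subset_closure (by simp)

lemma GeneratingPair.swap {x y : F2} (h : GeneratingPair x y) : GeneratingPair y x :=
  h.of_mem (right_mem_closure_pair _ _) (left_mem_closure_pair _ _)

lemma GeneratingPair.inv {x y : F2} (h : GeneratingPair x y) : GeneratingPair x⁻¹ y :=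
  h.of_mem (by simpa using inv_mem (left_mem_closure_pair x⁻¹ y)) (right_mem_closure_pair _ _)

lemma GeneratingPair.inv_mul {x y : F2} (h : GeneratingPair x y) :
    GeneratingPair x (x⁻¹ * y) :=
  h.of_mem (left_mem_closure_pair _ _)
    (by simpa using mul_mem (left_mem_closure_pair x (x⁻¹ * y)) (right_mem_closure_pair _ _))

lemma GeneratingPair.conj {x y : F2} (h : GeneratingPair x y) (g : F2) :
    GeneratingPair (g * x * g⁻¹) (g * y * g⁻¹) := by
  have := congrArg (Subgroup.map (MulAut.conj g).toMonoidHom) h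
  rw [MonoidHom.map_closure, Set.image_pair] at this
  rw [GeneratingPair]
  refine Eq.trans this ?_
  exact Subgroup.map_top_of_surjective _ (MulAut.conj g).surjective

lemma GeneratingPair.of_equiv (φ : F2 ≃* F2) : GeneratingPair (φ ga) (φ gb) := by
  have h : GeneratingPair ga gb := by
    have := FreeGroup.closure_range_of (Fin 2)
    rwa [Set.range_eq_iff _ {ga, gb} |>.2 (by
      refine ⟨fun i => ?_, ?_⟩
      · fin_cases i <;> simp [ga, gb]
      · rintro _ (rfl | rfl)
        exacts [⟨0, rfl⟩, ⟨1, rfl⟩])] at this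
  have := congrArg (Subgroup.map φ.toMonoidHom) h
  rw [MonoidHom.map_closure, Set.image_pair] at this
  exact this.trans (Subgroup.map_top_of_surjective _ φ.surjective)

lemma GeneratingPair.ne_one {x y : F2} (h : GeneratingPair x y) : x ≠ 1 := by
  rintro rfl
  have key (z : F2) : z ∈ Subgroup.zpowers y := by
    rw [Subgroup.zpowers_eq_closure]
    have : z ∈ Subgroup.closure {1, y} := by rw [h]; trivial
    simpa using this
  obtain ⟨m, hm⟩ := Subgroup.mem_zpowers_iff.1 (key ga)
  obtain ⟨n, hn⟩ := Subgroup.mem_zpowers_iff.1 (key gb)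
  have : ga * gb = gb * ga := by rw [← hm, ← hn, ← zpow_add, ← zpow_add, add_comm]
  revert this
  decide

lemma NielsenPair.of_inv {x y : F2} (h : NielsenPair x⁻¹ y) : NielsenPair x y := by
  simpa using h.inv

lemma NielsenPair.of_conj (g : F2) {x y : F2} (h : NielsenPair (g * x * g⁻¹) (g * y * g⁻¹)) :
    NielsenPair x y := by
  simpa [mul_assoc] using h.conj g⁻¹

lemma NielsenPair.of_inv_mul {x y : F2} (h : NielsenPair x (x⁻¹ * y)) : NielsenPair x y := by
  simpa [mul_assoc] using (h.swap.mul.conj x).swap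

/-- A generating pair which is minimal, for the total length, among those which
are not Nielsen equivalent to the standard basis. -/
structure MinimalCounterexample (x y : F2) : Prop where
  generating : GeneratingPair x y
  not_nielsen : ¬ NielsenPair x y
  nielsen_of_lt (x' y' : F2) : GeneratingPair x' y' → x'.norm + y'.norm < x.norm + y.norm →
    NielsenPair x' y'

namespace MinimalCounterexample

variable {x y : F2}

lemma swap (h : MinimalCounterexample x y) : MinimalCounterexample y x :=
  ⟨h.generating.swap, fun h' => h.not_nielsen h'.swap,
    fun x' y' hg hlt => h.nielsen_of_lt x' y' hg (by omega)⟩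

lemma inv (h : MinimalCounterexample x y) : MinimalCounterexample x⁻¹ y :=
  ⟨h.generating.inv, fun h' => h.not_nielsen h'.of_inv,
    fun x' y' hg hlt => h.nielsen_of_lt x' y' hg (by rwa [norm_inv_eq] at hlt)⟩

lemma inv_right (h : MinimalCounterexample x y) : MinimalCounterexample x y⁻¹ :=
  h.swap.inv.swap

lemma two_mul_cancellation_le_left (h : MinimalCounterexample x y) :
    2 * cancellation x y ≤ x.norm := by
  have h1 := norm_inv_mul_add_cancellation x y
  by_contra! hlt
  exact h.not_nielsen (h.nielsen_of_lt _ _ h.generating.inv_mul (by omega)).of_inv_mul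

lemma two_mul_cancellation_le_right (h : MinimalCounterexample x y) :
    2 * cancellation x y ≤ y.norm := by
  rw [cancellation_comm]
  exact h.swap.two_mul_cancellation_le_left

lemma cancellation_add_cancellation_inv_ne (h : MinimalCounterexample x y) :
    cancellation x y + cancellation x⁻¹ y⁻¹ ≠ y.norm := by
  intro heq
  have h1 := h.two_mul_cancellation_le_right
  have h2 := h.inv.inv_right.two_mul_cancellation_le_right
  have h3 := h.two_mul_cancellation_le_left
  rw [norm_inv_eq] at h2
  have hy : 0 < y.norm := Nat.pos_of_ne_zero fun h0 =>
    h.generating.swap.ne_one (norm_eq_zero.1 h0)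
  obtain ⟨p, s, t, hxw, hyw, hp, -⟩ := exists_split_toWord_inv_mul x y
  obtain ⟨p', s', t', hxw', hyw', hp', -⟩ := exists_split_toWord_inv_mul x⁻¹ y⁻¹
  have hlx : x.norm = p.length + s.length := by simp [FreeGroup.norm, hxw]
  have hly : y.norm = p.length + t.length := by simp [FreeGroup.norm, hyw]
  rw [toWord_inv, hxw, invRev_append] at hxw'
  rw [toWord_inv, hyw, invRev_append] at hyw'
  obtain ⟨rfl, -⟩ := List.append_inj hyw' (by rw [invRev_length]; omega)
  obtain ⟨r, hr⟩ : invRev t <+: invRev s :=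
    List.prefix_of_prefix_length_le ⟨s', hxw'.symm⟩ (List.prefix_append _ _)
      (by simp only [invRev_length]; omega)
  have hrl : t.length + r.length = s.length := by simpa using congrArg List.length hr
  have hST : (FreeGroup.mk s * (FreeGroup.mk t)⁻¹ : F2) = (FreeGroup.mk r)⁻¹ := by
    rw [← inv_inv (FreeGroup.mk s), inv_mk (L := s), ← hr, ← mul_mk, ← inv_mk]
    group
  have hx : x = FreeGroup.mk p * FreeGroup.mk s := by rw [mul_mk, ← hxw, mk_toWord]
  have hy' : y = FreeGroup.mk p * FreeGroup.mk t := by rw [mul_mk, ← hyw, mk_toWord]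
  have hgen := h.generating.conj (FreeGroup.mk p)⁻¹
  have hnot : ¬ NielsenPair _ _ := fun h' => h.not_nielsen (.of_conj (FreeGroup.mk p)⁻¹ h')
  have hx' : (FreeGroup.mk p)⁻¹ * x * (FreeGroup.mk p)⁻¹⁻¹ =
      (FreeGroup.mk r)⁻¹ * (FreeGroup.mk t * FreeGroup.mk p) := by
    rw [← hST, hx]
    group
  have hy'' : (FreeGroup.mk p)⁻¹ * y * (FreeGroup.mk p)⁻¹⁻¹ =
      FreeGroup.mk t * FreeGroup.mk p := by
    rw [hy']
    group
  rw [hx', hy''] at hgen hnot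
  refine hnot (NielsenPair.mul (h.nielsen_of_lt _ _ (hgen.of_mem ?_ ?_) ?_))
  · exact mul_mem (left_mem_closure_pair _ _) (right_mem_closure_pair _ _)
  · exact right_mem_closure_pair _ _
  · have e1 := norm_mk_le (L₁ := r)
    have e2 := norm_mk_le (L₁ := t ++ p)
    rw [mul_mk, norm_inv_eq]
    rw [List.length_append] at e2
    omega

end MinimalCounterexample

/-- The value of a letter when the generators are sent to `f 0` and `f 1`. -/
def letterValue {G : Type*} [Group G] (f : Fin 2 → G) (p : Fin 2 × Bool) : G :=
  bif p.2 then f p.1 else (f p.1)⁻¹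

lemma eq_not_of_fst_eq_of_ne {p q : Fin 2 × Bool} (h : p.1 = q.1) (hne : p ≠ q) :
    p = (q.1, !q.2) := by
  obtain ⟨i, b⟩ := p
  obtain ⟨j, c⟩ := q
  cases b <;> cases c <;> simp_all

lemma letterValue_not {G : Type*} [Group G] (f : Fin 2 → G) (p : Fin 2 × Bool) :
    letterValue f (p.1, !p.2) = (letterValue f p)⁻¹ := by
  obtain ⟨i, b⟩ := p
  cases b <;> simp [letterValue]

lemma lift_eq_prod_letterValue {G : Type*} [Group G] (f : Fin 2 → G) (w : F2) :
    FreeGroup.lift f w = (w.toWord.map (letterValue f)).prod := by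
  conv_lhs => rw [← mk_toWord (x := w), FreeGroup.lift_mk]
  rfl

/-- In products of two letters less than half of each letter cancels, in the
strict sense needed for a middle factor of a product to survive. -/
def NielsenReduced (f : Fin 2 → F2) : Prop :=
  ∀ p q r : Fin 2 × Bool, q ≠ p → r ≠ (q.1, !q.2) →
    cancellation (letterValue f p) (letterValue f q) +
      cancellation (letterValue f q)⁻¹ (letterValue f r) < (letterValue f q).norm

lemma NielsenReduced.cancellation_prod {f : Fin 2 → F2} (hf : NielsenReduced f)
    (L : List (Fin 2 × Bool)) (q r : Fin 2 × Bool) (hL : IsReduced (L ++ [q]))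
    (hr : r ≠ (q.1, !q.2)) :
    cancellation ((L ++ [q]).map (letterValue f)).prod⁻¹ (letterValue f r) =
        cancellation (letterValue f q)⁻¹ (letterValue f r) ∧
      cancellation (letterValue f q)⁻¹ (letterValue f r) + (L.length + 1) ≤
        ((L ++ [q]).map (letterValue f)).prod.norm := by
  induction L using List.reverseRecOn generalizing q r with
  | nil =>
    have := hf (q.1, !q.2) q r (by simp [Prod.ext_iff]) hr
    simp
    omega
  | append_singleton L k ih =>
    have hqk : q ≠ (k.1, !k.2) := by
      rintro rfl
      have := hL.infix (L₁ := [k, (k.1, !k.2)]) ⟨L, [], by simp⟩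
      simp at this
    obtain ⟨h1, h2⟩ := ih k q (hL.infix ⟨[], [q], by simp⟩) hqk
    have h3 := hf (k.1, !k.2) q r hqk hr
    rw [letterValue_not] at h3
    rw [List.map_append, List.prod_append, List.map_singleton, List.prod_singleton]
    set g := ((L ++ [k]).map (letterValue f)).prod
    have h4 := cancellation_inv_mul (letterValue f q) g⁻¹
    have h5 := norm_inv_mul_add_cancellation g⁻¹ (letterValue f q)
    rw [cancellation_comm (letterValue f q), ← mul_inv_rev] at h4
    rw [inv_inv, norm_inv_eq] at h5
    have h6 := min_cancellation_le (letterValue f q)⁻¹ (g * letterValue f q)⁻¹ (letterValue f r)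
    have h7 := min_cancellation_le (g * letterValue f q)⁻¹ (letterValue f q)⁻¹ (letterValue f r)
    rw [cancellation_comm (g * letterValue f q)⁻¹ (letterValue f q)⁻¹] at h7
    rw [List.length_append, List.length_singleton]
    omega

lemma NielsenReduced.length_le_norm_lift {f : Fin 2 → F2} (hf : NielsenReduced f) (w : F2) :
    w.norm ≤ (FreeGroup.lift f w).norm := by
  rw [lift_eq_prod_letterValue, FreeGroup.norm]
  have hw := isReduced_toWord (x := w)
  rcases List.eq_nil_or_concat' w.toWord with h | ⟨L, q, h⟩
  · simp [h]
  · rw [h] at hw ⊢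
    have := (hf.cancellation_prod L q q hw (by simp [Prod.ext_iff])).2
    simp only [List.length_append, List.length_singleton]
    omega

lemma MinimalCounterexample.pair_letterValue {x y : F2} (h : MinimalCounterexample x y)
    {p q : Fin 2 × Bool} (hpq : p.1 ≠ q.1) :
    MinimalCounterexample (letterValue ![x, y] p) (letterValue ![x, y] q) := by
  obtain ⟨i, b⟩ := p
  obtain ⟨j, c⟩ := q
  fin_cases i <;> fin_cases j <;> simp at hpq <;> cases b <;> cases c <;>
    simp only [letterValue] <;>
    first
    | exact h | exact h.inv | exact h.inv_right | exact h.inv.inv_right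
    | exact h.swap | exact h.swap.inv | exact h.swap.inv_right | exact h.swap.inv.inv_right

lemma MinimalCounterexample.nielsenReduced {x y : F2} (h : MinimalCounterexample x y) :
    NielsenReduced ![x, y] := by
  intro p q r hqp hrq
  have hq : letterValue ![x, y] q ≠ 1 := by
    obtain ⟨q', hq'⟩ : ∃ q' : Fin 2 × Bool, q.1 ≠ q'.1 := ⟨(q.1 + 1, true), by simp⟩
    exact (h.pair_letterValue hq').generating.ne_one
  have hself := two_mul_cancellation_inv_lt hq
  have hself' := hself
  rw [cancellation_comm] at hself'
  have key (s : Fin 2 × Bool) (hs : s.1 ≠ q.1) :=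
    (h.pair_letterValue hs).two_mul_cancellation_le_right
  have key' (s : Fin 2 × Bool) (hs : s.1 ≠ q.1) :=
    (h.pair_letterValue hs).inv_right.two_mul_cancellation_le_right
  have hp : p.1 ≠ q.1 ∨ p = (q.1, !q.2) :=
    or_iff_not_imp_left.2 fun hpq => eq_not_of_fst_eq_of_ne (not_not.1 hpq) hqp.symm
  have hr : r.1 ≠ q.1 ∨ r = q := by
    refine or_iff_not_imp_left.2 fun hqr => ?_
    simpa using eq_not_of_fst_eq_of_ne (q := (q.1, !q.2)) (not_not.1 hqr) hrq
  rw [cancellation_comm _ (letterValue ![x, y] r)]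
  rcases hp with hp | rfl <;> rcases hr with hr | rfl
  · have h1 := key p hp
    have h2 := key' r hr
    rw [norm_inv_eq] at h2
    by_contra! hlt
    by_cases hpr : r = p
    · subst hpr
      have h3 := min_cancellation_le (letterValue ![x, y] q)
        (letterValue ![x, y] r) (letterValue ![x, y] q)⁻¹
      rw [cancellation_comm _ (letterValue ![x, y] r)] at h3
      omega
    · have hpr' : r = (p.1, !p.2) := eq_not_of_fst_eq_of_ne (by omega) hpr
      subst hpr'
      have := (h.pair_letterValue hp).cancellation_add_cancellation_inv_ne
      rw [letterValue_not] at hlt h2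
      omega
  · have h1 := key p hp
    omega
  · have h2 := key' r hr
    rw [norm_inv_eq] at h2
    rw [letterValue_not]
    omega
  · rw [letterValue_not]
    omega

lemma not_minimalCounterexample (x y : F2) : ¬ MinimalCounterexample x y := by
  intro h
  have hsurj : Function.Surjective (FreeGroup.lift ![x, y]) := by
    rw [lift_surjective_iff_closure_range_eq_top, ← h.generating]
    simp [Set.pair_comm]
  have key (z : F2) (hz : z.norm = 1) : ∃ p, z = letterValue ![x, y] p := by
    obtain ⟨w, rfl⟩ := hsurj z
    have h1 := h.nielsenReduced.length_le_norm_lift w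
    rw [lift_eq_prod_letterValue] at hz ⊢
    rcases hw : w.toWord with _ | ⟨p, _ | ⟨p', t⟩⟩
    · simp [hw] at hz
    · exact ⟨p, by simp⟩
    · have h2 := h.nielsenReduced.length_le_norm_lift w
      rw [lift_eq_prod_letterValue, hz] at h2
      simp [FreeGroup.norm, hw] at h2
  obtain ⟨p, hp⟩ := key ga (norm_of 0)
  obtain ⟨q, hq⟩ := key gb (norm_of 1)
  have hab : ga ≠ gb := by decide
  have hab' : ga⁻¹ ≠ gb := by decide
  have hbase := NielsenPair.base
  rw [hp, hq] at hab hab' hbase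
  apply h.not_nielsen
  obtain ⟨i, b⟩ := p
  obtain ⟨j, c⟩ := q
  fin_cases i <;> fin_cases j <;> cases b <;> cases c <;>
    simp [letterValue] at hab hab' hbase ⊢ <;>
    first
    | exact hbase | exact hbase.of_inv | exact hbase.swap | exact hbase.of_inv.swap
    | exact hbase.swap.of_inv | exact hbase.of_inv.swap.of_inv
    | exact hbase.swap.of_inv.swap | exact hbase.swap.of_inv.swap.of_inv

theorem GeneratingPair.nielsenPair {x y : F2} (h : GeneratingPair x y) : NielsenPair x y := by
  induction hn : x.norm + y.norm using Nat.strong_induction_on generalizing x y with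
  | _ n ih =>
    by_contra hne
    exact not_minimalCounterexample x y
      ⟨h, hne, fun x' y' hg hlt => ih _ (hn ▸ hlt) hg rfl⟩

end NielsenReduction

section AdjacentCount

/-- The number of pairs of adjacent letters of `L` both of which are `e` or `e⁻¹`. -/
def adjacentCount (e : Fin 2) : List (Fin 2 × Bool) → ℕ
  | x :: y :: t => (if x.1 = e ∧ y.1 = e then 1 else 0) + adjacentCount e (y :: t)
  | _ => 0

variable (e : Fin 2)

lemma adjacentCount_append (L M : List (Fin 2 × Bool)) :
    adjacentCount e L + adjacentCount e M ≤ adjacentCount e (L ++ M) ∧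
      adjacentCount e (L ++ M) ≤ adjacentCount e L + adjacentCount e M + 1 := by
  induction L with
  | nil => simp [adjacentCount]
  | cons x L ih =>
    cases L with
    | nil =>
      cases M with
      | nil => simp [adjacentCount]
      | cons y M =>
        simp only [List.cons_append, List.nil_append, adjacentCount]
        split_ifs <;> omega
    | cons y L =>
      simp only [List.cons_append, adjacentCount] at ih ⊢
      omega

lemma adjacentCount_append_pair (L : List (Fin 2 × Bool)) (x y : Fin 2 × Bool) :
    adjacentCount e (L ++ [x, y]) =
      adjacentCount e (L ++ [x]) + if x.1 = e ∧ y.1 = e then 1 else 0 := by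
  induction L with
  | nil => simp [adjacentCount]
  | cons z L ih =>
    cases L <;> simp_all [adjacentCount, add_assoc]

lemma adjacentCount_invRev (L : List (Fin 2 × Bool)) :
    adjacentCount e (invRev L) = adjacentCount e L := by
  induction L with
  | nil => simp
  | cons x L ih =>
    cases L with
    | nil => simp [invRev, adjacentCount]
    | cons y L =>
      have h : invRev (x :: y :: L) = invRev L ++ [(y.1, !y.2), (x.1, !x.2)] := by simp [invRev]
      have h' : invRev (y :: L) = invRev L ++ [(y.1, !y.2)] := by simp [invRev]
      rw [h, adjacentCount_append_pair, ← h', ih, adjacentCount, add_comm]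
      simp [and_comm]

lemma adjacentCount_le_of_infix {L M : List (Fin 2 × Bool)} (h : L <:+: M) :
    adjacentCount e L ≤ adjacentCount e M := by
  obtain ⟨s, t, rfl⟩ := h
  have h1 := (adjacentCount_append e (s ++ L) t).1
  have h2 := (adjacentCount_append e s L).1
  omega

lemma adjacentCount_replicate (b : Bool) (n : ℕ) :
    adjacentCount e (List.replicate (n + 1) (e, b)) = n := by
  induction n with
  | zero => rfl
  | succ n ih => rw [List.replicate_succ, List.replicate_succ, adjacentCount,
      ← List.replicate_succ, ih]; simp [add_comm]

lemma mul_adjacentCount_le_flatten_replicate (L : List (Fin 2 × Bool)) (n : ℕ) :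
    n * adjacentCount e L ≤ adjacentCount e (List.replicate n L).flatten := by
  induction n with
  | zero => simp
  | succ n ih =>
    have := (adjacentCount_append e L (List.replicate n L).flatten).1
    rw [List.replicate_succ, List.flatten_cons, Nat.succ_mul]
    omega

lemma adjacentCount_toWord_inv (u : F2) :
    adjacentCount e u⁻¹.toWord = adjacentCount e u.toWord := by
  rw [toWord_inv, adjacentCount_invRev]

lemma adjacentCount_toWord_mul_le (u v : F2) :
    adjacentCount e (u * v).toWord ≤
      adjacentCount e u.toWord + adjacentCount e v.toWord + 1 := by
  obtain ⟨p, s, t, hu, hv, -, h⟩ := exists_split_toWord_inv_mul u⁻¹ v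
  rw [inv_inv] at h
  have h1 := (adjacentCount_append e (invRev s) t).2
  have h2 := (adjacentCount_append e p s).1
  have h3 := (adjacentCount_append e p t).1
  rw [adjacentCount_invRev] at h1
  rw [h, hv, ← adjacentCount_toWord_inv, hu]
  omega

variable {e}

lemma adjacentCount_prod_mul_le {f : Fin 2 → F2} (hf : ∀ i, adjacentCount e (f i).toWord = 0)
    (L : List (Fin 2 × Bool)) (z : F2) :
    adjacentCount e ((L.map (letterValue f)).prod * z).toWord ≤
      L.length + adjacentCount e z.toWord := by
  induction L with
  | nil => simp
  | cons p L ih =>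
    have h0 : adjacentCount e (letterValue f p).toWord = 0 := by
      obtain ⟨i, b⟩ := p
      cases b <;> simp [letterValue, adjacentCount_invRev, hf]
    have := adjacentCount_toWord_mul_le e (letterValue f p) ((L.map (letterValue f)).prod * z)
    rw [List.map_cons, List.prod_cons, List.length_cons, mul_assoc]
    omega

lemma adjacentCount_lift_pow_le {f : Fin 2 → F2} (hf : ∀ i, adjacentCount e (f i).toWord = 0)
    (w : F2) (n : ℕ) :
    adjacentCount e (FreeGroup.lift f w ^ n).toWord ≤ n * w.toWord.length := by
  induction n with
  | zero => simp [adjacentCount]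
  | succ n ih =>
    have := adjacentCount_prod_mul_le hf w.toWord (FreeGroup.lift f w ^ n)
    rw [← lift_eq_prod_letterValue, ← pow_succ'] at this
    rw [Nat.succ_mul]
    omega

lemma CyclicallyReduced.toWord_pow {c : F2} (hc : CyclicallyReduced c.toWord) (n : ℕ) :
    (c ^ n).toWord = (List.replicate n c.toWord).flatten := by
  have : IsCyclicallyReduced c.toWord := by
    refine ⟨isReduced_toWord, fun q hq p hp hqp => ?_⟩
    have := hc p hp q hq
    obtain ⟨i, b⟩ := p
    obtain ⟨j, c⟩ := q
    cases b <;> cases c <;> simp_all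
  rw [FreeGroup.toWord_pow, (this.flatten_replicate n).isReduced.reduce_eq]

/-- If `c` is cyclically reduced and conjugate to a product of `n` letters of a pair of words
without repeated `e`-letters, then `c` has at most `n` pairs of adjacent `e`-letters. -/
lemma adjacentCount_le_of_conj_lift {f : Fin 2 → F2}
    (hf : ∀ i, adjacentCount e (f i).toWord = 0) {w c h : F2}
    (hc : CyclicallyReduced c.toWord) (hw : FreeGroup.lift f w = h * c * h⁻¹) :
    adjacentCount e c.toWord ≤ w.toWord.length := by
  set C := 2 * adjacentCount e h.toWord + 2 with hC
  have h1 := mul_adjacentCount_le_flatten_replicate e c.toWord (C + 1)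
  have h2 := adjacentCount_lift_pow_le hf w (C + 1)
  rw [← hc.toWord_pow] at h1
  have h3 : c ^ (C + 1) = h⁻¹ * FreeGroup.lift f w ^ (C + 1) * h := by
    rw [hw, conj_pow]
    group
  have h4 := adjacentCount_toWord_mul_le e (h⁻¹ * FreeGroup.lift f w ^ (C + 1)) h
  have h5 := adjacentCount_toWord_mul_le e h⁻¹ (FreeGroup.lift f w ^ (C + 1))
  rw [adjacentCount_toWord_inv] at h5
  rw [← h3] at h4
  by_contra! hlt
  have h6 := Nat.mul_le_mul_left (C + 1) (Nat.succ_le_of_lt hlt)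
  rw [Nat.mul_succ] at h6
  omega

end AdjacentCount

section PositivePairs

/-- The pairs obtained from a pair of independent letters by positive Nielsen moves. -/
inductive PositivePair : F2 → F2 → Prop
  | letters (p q : Fin 2 × Bool) (h : p.1 ≠ q.1) :
      PositivePair (FreeGroup.mk [p]) (FreeGroup.mk [q])
  | mul_left {x y : F2} : PositivePair x y → PositivePair (x * y) y
  | mul_right {x y : F2} : PositivePair x y → PositivePair x (y * x)

lemma PositivePair.swap {x y : F2} (h : PositivePair x y) : PositivePair y x := by
  induction h with
  | letters p q h => exact .letters q p h.symm
  | mul_left _ ih => exact ih.mul_right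
  | mul_right _ ih => exact ih.mul_left

/-- The pair `x`, `y` is, up to simultaneous conjugation and inversion of either
entry, a positive pair. -/
def IsConjPositive (x y : F2) : Prop :=
  ∃ h X Y : F2, PositivePair X Y ∧ (h * x * h⁻¹ = X ∨ h * x * h⁻¹ = X⁻¹) ∧
    (h * y * h⁻¹ = Y ∨ h * y * h⁻¹ = Y⁻¹)

namespace IsConjPositive

variable {x y : F2}

lemma _root_.PositivePair.isConjPositive (h : PositivePair x y) : IsConjPositive x y :=
  ⟨1, x, y, h, by simp, by simp⟩

lemma swap (h : IsConjPositive x y) : IsConjPositive y x := by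
  obtain ⟨k, X, Y, hp, hx, hy⟩ := h
  exact ⟨k, Y, X, hp.swap, hy, hx⟩

lemma inv (h : IsConjPositive x y) : IsConjPositive x⁻¹ y := by
  obtain ⟨k, X, Y, hp, hx, hy⟩ := h
  refine ⟨k, X, Y, hp, ?_, hy⟩
  rw [← conj_inv, inv_inj, inv_eq_iff_eq_inv]
  exact hx.symm

lemma of_inv (h : IsConjPositive x⁻¹ y) : IsConjPositive x y := by
  simpa using h.inv

lemma of_inv_right (h : IsConjPositive x y⁻¹) : IsConjPositive x y :=
  h.swap.of_inv.swap

lemma of_conj (g : F2) (h : IsConjPositive (g * x * g⁻¹) (g * y * g⁻¹)) :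
    IsConjPositive x y := by
  obtain ⟨k, X, Y, hp, hx, hy⟩ := h
  refine ⟨k * g, X, Y, hp, ?_, ?_⟩
  · simpa [mul_assoc] using hx
  · simpa [mul_assoc] using hy

lemma conj (g : F2) (h : IsConjPositive x y) : IsConjPositive (g * x * g⁻¹) (g * y * g⁻¹) :=
  of_conj g⁻¹ (by simpa [mul_assoc] using h)

lemma _root_.PositivePair.isConjPositive_mul_inv (h : PositivePair x y) :
    IsConjPositive (x * y⁻¹) y := by
  cases h with
  | letters p q h =>
    have := (PositivePair.letters p (q.1, !q.2) h).mul_left.isConjPositive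
    rw [show (FreeGroup.mk [(q.1, !q.2)] : F2) = (FreeGroup.mk [q])⁻¹ by simp [invRev]] at this
    exact this.of_inv_right
  | mul_left h => simpa using h.isConjPositive
  | @mul_right _ z h =>
    refine of_conj z⁻¹ ?_
    simpa [mul_assoc] using h.mul_left.swap.isConjPositive.inv

lemma mul (h : IsConjPositive x y) : IsConjPositive (x * y) y := by
  obtain ⟨k, X, Y, hp, hx, hy⟩ := h
  refine of_conj k ?_
  rw [← conj_mul]
  rcases hx with hx | hx <;> rcases hy with hy | hy <;> rw [hx, hy]
  · exact hp.mul_left.isConjPositive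
  · exact hp.isConjPositive_mul_inv.swap.inv.swap
  · refine of_inv (of_conj Y ?_)
    simpa [mul_assoc] using hp.isConjPositive_mul_inv
  · refine of_inv (of_inv_right (of_conj Y⁻¹ ?_))
    simpa [mul_assoc] using hp.mul_left.isConjPositive

lemma _root_.NielsenPair.isConjPositive (h : NielsenPair x y) : IsConjPositive x y := by
  induction h with
  | base => exact (PositivePair.letters (0, true) (1, true) (by simp)).isConjPositive
  | swap _ ih => exact ih.swap
  | inv _ ih => exact ih.inv
  | mul _ ih => exact ih.mul
  | conj g _ ih => exact ih.conj g

end IsConjPositive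

lemma PositivePair.letters_or_mem_closure {x y : F2} (h : PositivePair x y) :
    (∃ p q : Fin 2 × Bool, p.1 ≠ q.1 ∧ x = FreeGroup.mk [p] ∧ y = FreeGroup.mk [q]) ∨
      ∃ p q : Fin 2 × Bool, p.1 ≠ q.1 ∧
        x ∈ Submonoid.closure {(FreeGroup.mk [p, q] : F2), FreeGroup.mk [q]} ∧
        y ∈ Submonoid.closure {(FreeGroup.mk [p, q] : F2), FreeGroup.mk [q]} := by
  have key (p q : Fin 2 × Bool) :
      (FreeGroup.mk [p, q] : F2) ∈
          Submonoid.closure {(FreeGroup.mk [p, q] : F2), FreeGroup.mk [q]} ∧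
        (FreeGroup.mk [q] : F2) ∈
          Submonoid.closure {(FreeGroup.mk [p, q] : F2), FreeGroup.mk [q]} :=
    ⟨Submonoid.subset_closure (by simp), Submonoid.subset_closure (by simp)⟩
  induction h with
  | letters p q h => exact .inl ⟨p, q, h, rfl, rfl⟩
  | mul_left _ ih =>
    rcases ih with ⟨p, q, hpq, rfl, rfl⟩ | ⟨p, q, hpq, hx, hy⟩
    · exact .inr ⟨p, q, hpq, by simpa using key p q⟩
    · exact .inr ⟨p, q, hpq, mul_mem hx hy, hy⟩
  | mul_right _ ih =>
    rcases ih with ⟨p, q, hpq, rfl, rfl⟩ | ⟨p, q, hpq, hx, hy⟩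
    · exact .inr ⟨q, p, hpq.symm, by simpa using (key q p).symm⟩
    · exact .inr ⟨p, q, hpq, hx, mul_mem hy hx⟩

lemma adjacentCount_eq_zero_of_mem_closure {p q : Fin 2 × Bool} (hpq : p.1 ≠ q.1) {z : F2}
    (hz : z ∈ Submonoid.closure {(FreeGroup.mk [p, q] : F2), FreeGroup.mk [q]}) :
    adjacentCount p.1 z.toWord = 0 := by
  suffices H : ∃ L, z = FreeGroup.mk L ∧ (∀ r ∈ L, r = p ∨ r = q) ∧ adjacentCount p.1 L = 0 by
    obtain ⟨L, rfl, hL, h0⟩ := H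
    have hred : IsReduced L := by
      refine (List.pairwise_of_forall_mem_list fun r hr s hs hrs => ?_).isChain
      rcases hL r hr with rfl | rfl <;> rcases hL s hs with rfl | rfl <;> simp_all
    rwa [toWord_mk, hred.reduce_eq]
  have hq (L) (h0 : adjacentCount p.1 L = 0) : adjacentCount p.1 (q :: L) = 0 := by
    cases L <;> simp [adjacentCount, hpq.symm, h0]
  induction hz using Submonoid.closure_induction_left with
  | one => exact ⟨[], rfl, by simp, rfl⟩
  | mul_left s hs z _ ih =>
    obtain ⟨L, rfl, hL, h0⟩ := ih
    rcases hs with rfl | rfl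
    · exact ⟨p :: q :: L, by simp, by simpa using hL,
        by simp [adjacentCount, hpq.symm, hq L h0]⟩
    · exact ⟨q :: L, by simp, by simpa using hL, hq L h0⟩

lemma PositivePair.exists_adjacentCount_eq_zero {x y : F2} (h : PositivePair x y) :
    ∃ e, adjacentCount e x.toWord = 0 ∧ adjacentCount e y.toWord = 0 := by
  rcases h.letters_or_mem_closure with ⟨p, q, -, rfl, rfl⟩ | ⟨p, q, hpq, hx, hy⟩
  · exact ⟨0, rfl, rfl⟩
  · exact ⟨p.1, adjacentCount_eq_zero_of_mem_closure hpq hx,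
      adjacentCount_eq_zero_of_mem_closure hpq hy⟩

/-- Every basis of `F₂` is simultaneously conjugate to one in which, for a suitable generator `e`,
no word has two adjacent letters equal to `e` or `e⁻¹`. -/
theorem exists_conj_adjacentCount_eq_zero (φ : F2 ≃* F2) :
    ∃ (k : F2) (e : Fin 2), adjacentCount e (k * φ ga * k⁻¹).toWord = 0 ∧
      adjacentCount e (k * φ gb * k⁻¹).toWord = 0 := by
  obtain ⟨k, X, Y, hp, hx, hy⟩ := (GeneratingPair.of_equiv φ).nielsenPair.isConjPositive
  obtain ⟨e, h1, h2⟩ := hp.exists_adjacentCount_eq_zero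
  refine ⟨k, e, ?_, ?_⟩
  · rcases hx with hx | hx <;> simp only [hx, adjacentCount_toWord_inv, h1]
  · rcases hy with hy | hy <;> simp only [hy, adjacentCount_toWord_inv, h2]

end PositivePairs

lemma toWord_ga_pow_mul_gb_pow (n : ℕ) :
    (ga ^ n * gb ^ n).toWord = List.replicate n (0, true) ++ List.replicate n (1, true) := by
  rw [toWord_mul, ga, gb, toWord_of_pow, toWord_of_pow]
  refine IsReduced.reduce_eq (List.Pairwise.isChain ?_)
  refine List.pairwise_of_forall_mem_list fun r hr s hs _ => ?_
  simp only [List.mem_append, List.mem_replicate] at hr hs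
  rcases hr with ⟨-, rfl⟩ | ⟨-, rfl⟩ <;> rcases hs with ⟨-, rfl⟩ | ⟨-, rfl⟩ <;> rfl

/-- Orbit-blocking words exist: for every `w ∈ F₂` of length `l`, the word
`g = a^{l+2} b^{l+2}` is such that no cyclically reduced image of `w` under an
automorphism of `F₂` (equivalently, no cyclically reduced conjugate `c` of any
automorphic image) contains `g` as a subword. -/
theorem orbit_blocking_exists (w : F2) :
    ∃ g : F2, g = ga ^ (w.toWord.length + 2) * gb ^ (w.toWord.length + 2) ∧
      ∀ φ : F2 ≃* F2, ∀ c h : F2, φ w = h * c * h⁻¹ →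
        CyclicallyReduced c.toWord → ¬ g.toWord <:+: c.toWord := by
  refine ⟨_, rfl, fun φ c h hφ hc hg => ?_⟩
  obtain ⟨k, e, h1, h2⟩ := exists_conj_adjacentCount_eq_zero φ
  have hf (i : Fin 2) :
      adjacentCount e (![k * φ ga * k⁻¹, k * φ gb * k⁻¹] i).toWord = 0 := by
    fin_cases i <;> assumption
  have hlift : FreeGroup.lift ![k * φ ga * k⁻¹, k * φ gb * k⁻¹] =
      (MulAut.conj k).toMonoidHom.comp φ.toMonoidHom := by
    ext i
    fin_cases i <;> simp [ga, gb]
  have hle := adjacentCount_le_of_conj_lift hf (w := w) (h := k * h) hc (by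
    rw [hlift]
    change k * φ w * k⁻¹ = _
    rw [hφ]
    group)
  rw [toWord_ga_pow_mul_gb_pow] at hg
  have hinf : List.replicate (w.toWord.length + 2) (e, true) <:+: c.toWord := by
    refine List.IsInfix.trans ?_ hg
    fin_cases e
    · exact (List.prefix_append _ _).isInfix
    · exact (List.suffix_append _ _).isInfix
  have := adjacentCount_le_of_infix e hinf
  rw [adjacentCount_replicate] at this
  omega
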